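/- Let F be a formal group law over a commutative ring R with inverse ι. Then p_F(z) := F^{0,1}(z,0)^{-1} ∈ R⟦z⟧ is the unique power series p with p(0) = 1 satisfying the invariance identities p(F(z,w))·F^{1,0}(z,w) = p(z) and p(F(z,w))·F^{0,1}(z,w) = p(w) in R⟦z,w⟧. Moreover, p_F(ι(z))·ι'(z) = −p_F(z) in R⟦z⟧, where ι' is the formal derivative of ι and p_F(ι(z)) denotes composition of p_F with ι. -/

import Mathlib

/-!
Coefficient-wise formal calculus for vertex `F`-algebras, following
M. Upmeier, "Vertex F-Algebras and Their Associated Lie Algebra".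

Series in one, two or three variables are represented by their coefficient
functions `ℤ → R`, `ℤ → ℤ → R`, …; products are given by coefficient-wise
(finite) sums, expressed via `finsum` (`∑ᶠ`).
-/

open scoped BigOperators

noncomputable section

/-- Generalized binomial coefficient `C(n,k) = n(n-1)⋯(n-k+1)/k!` for `n : ℤ`, `k : ℕ`. -/
def zbinom (n : ℤ) (k : ℕ) : ℤ :=
  if 0 ≤ n then (n.toNat.choose k : ℤ)
  else (-1 : ℤ) ^ k * (((k : ℤ) - n - 1).toNat.choose k : ℤ)

/-- `C(n,m)` for integer `m`, with `C(n,m) = 0` for `m < 0`. -/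
def zbinomZ (n m : ℤ) : ℤ := if m < 0 then 0 else zbinom n m.toNat

/-- `(-1)^n` for `n : ℤ`. -/
def msign (n : ℤ) : ℤ := if Even n then 1 else -1

section Series

variable {R : Type*} [CommRing R] {M : Type*} [AddCommGroup M] [Module R M]

/-- Product of a one-variable series with `R`-coefficients with an `M`-valued one. -/
def mulS (f : ℤ → R) (g : ℤ → M) : ℤ → M := fun n => ∑ᶠ i : ℤ, f i • g (n - i)

/-- The constant series `1` (one variable). -/
def oneS (R : Type*) [CommRing R] : ℤ → R := fun n => if n = 0 then 1 else 0

/-- Natural powers of a one-variable series. -/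
def pow1 (f : ℤ → R) : ℕ → ℤ → R
  | 0 => oneS R
  | k + 1 => mulS f (pow1 f k)

/-- Product of two-variable series. -/
def mulS2 (f : ℤ → ℤ → R) (g : ℤ → ℤ → M) : ℤ → ℤ → M :=
  fun a b => ∑ᶠ p : ℤ × ℤ, f p.1 p.2 • g (a - p.1) (b - p.2)

/-- The constant series `1` (two variables). -/
def oneS2 (R : Type*) [CommRing R] : ℤ → ℤ → R := fun a b => if a = 0 ∧ b = 0 then 1 else 0

/-- Natural powers of a two-variable series. -/
def pow2 (f : ℤ → ℤ → R) : ℕ → ℤ → ℤ → R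
  | 0 => oneS2 R
  | k + 1 => mulS2 f (pow2 f k)

/-- `f ∈ M((z))`: only finitely many negative powers. -/
def IsLaurent (f : ℤ → M) : Prop := ∃ N : ℤ, ∀ n : ℤ, n < N → f n = 0

/-- `f ∈ M((z,w))`: only finitely many nonzero coefficients with some negative index. -/
def IsLaurent2 (f : ℤ → ℤ → M) : Prop :=
  {p : ℤ × ℤ | (p.1 < 0 ∨ p.2 < 0) ∧ f p.1 p.2 ≠ 0}.Finite

/-- Formal derivative of a one-variable series. -/
def fderiv1 (f : ℤ → R) : ℤ → R := fun n => ((n + 1 : ℤ) : R) * f (n + 1)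

/-- The polynomial `z - w` as a two-variable series. -/
def zmw (R : Type*) [CommRing R] : ℤ → ℤ → R :=
  fun i j => if i = 1 ∧ j = 0 then 1 else if i = 0 ∧ j = 1 then -1 else 0

/-- `∂/∂w` of a two-variable series. -/
def d01 (f : ℤ → ℤ → R) : ℤ → ℤ → R := fun i j => ((j + 1 : ℤ) : R) * f i (j + 1)

/-- `∂/∂z` of a two-variable series. -/
def d10 (f : ℤ → ℤ → R) : ℤ → ℤ → R := fun i j => ((i + 1 : ℤ) : R) * f (i + 1) j

/-- Substitution `p(f(z,w))` of a two-variable series (zero constant term) into a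
one-variable power series `p`. -/
def comp2 (p : ℤ → R) (f : ℤ → ℤ → R) : ℤ → ℤ → R :=
  fun a b => ∑ᶠ m : ℕ, p (m : ℤ) * pow2 f m a b

/-- Substitution `p(f(z))` of a one-variable series (zero constant term) into a
one-variable power series `p`. -/
def comp1 (p : ℤ → R) (f : ℤ → R) : ℤ → R :=
  fun a => ∑ᶠ m : ℕ, p (m : ℤ) * pow1 f m a

/-- `(G - z)/z` for `G ≡ z (mod w)`. -/
def hzS (G : ℤ → ℤ → R) : ℤ → ℤ → R := fun i j => G (i + 1) j - oneS2 R i j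

/-- Integer powers `i_{z,w} G^n`, for `G ≡ z (mod w)`, expanded in `R((z))⟦w⟧`:
the Newton expansion `z^n ∑_k C(n,k) ((G-z)/z)^k`. -/
def izwPow (G : ℤ → ℤ → R) (n : ℤ) : ℤ → ℤ → R :=
  fun a b => ∑ᶠ k : ℕ, (zbinom n k : R) * pow2 (hzS G) k (a - n) b

/-- `(G - w)/w` for `G ≡ w (mod z)`. -/
def hwS (G : ℤ → ℤ → R) : ℤ → ℤ → R := fun i j => G i (j + 1) - oneS2 R i j

/-- Integer powers `i_{w,z} G^n`, for `G ≡ w (mod z)`, expanded in `R((w))⟦z⟧`. -/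
def iwzPow (G : ℤ → ℤ → R) (n : ℤ) : ℤ → ℤ → R :=
  fun a b => ∑ᶠ k : ℕ, (zbinom n k : R) * pow2 (hwS G) k a (b - n)

/-- `(G + w)/(-w)` for `G ≡ ι(w) (mod z)`. -/
def hwNegS (G : ℤ → ℤ → R) : ℤ → ℤ → R := fun i j => -G i (j + 1) - oneS2 R i j

/-- Integer powers `i_{w,z} G^n`, for `G ≡ -w(1+⋯) (mod z)` (e.g. `G = F(z, ι w)`),
expanded in `R((w))⟦z⟧`. -/
def iwzPowNeg (G : ℤ → ℤ → R) (n : ℤ) : ℤ → ℤ → R :=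
  fun a b => (msign n : R) * ∑ᶠ k : ℕ, (zbinom n k : R) * pow2 (hwNegS G) k a (b - n)

/-- `(f + z)/(-z)` for a series `f = -z(1 + ⋯)` such as `ι(z)`. -/
def hS (f : ℤ → R) : ℤ → R := fun j => -f (j + 1) - oneS R j

/-- Integer powers `f(z)^n` (`n : ℤ`) for `f = -z(1+⋯)`, e.g. `f = ι(z)`. -/
def iotaPow (f : ℤ → R) (n : ℤ) : ℤ → R :=
  fun a => (msign n : R) * ∑ᶠ k : ℕ, (zbinom n k : R) * pow1 (hS f) k (a - n)

/-- `f - 1` for a power series with constant term `1`. -/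
def hOneS (f : ℤ → R) : ℤ → R := fun j => f j - oneS R j

/-- Multiplicative inverse of a power series with constant term `1`. -/
def invOne (f : ℤ → R) : ℤ → R :=
  fun a => ∑ᶠ k : ℕ, ((-1 : R) ^ k) * pow1 (hOneS f) k a

end Series

/-- A (one-dimensional, commutative) formal group law `F(z,w)` over `R`, together with
its (unique) inverse `ι`. -/
structure FormalGroupLaw (R : Type*) [CommRing R] where
  F : ℤ → ℤ → R
  F_supp : ∀ i j : ℤ, i < 0 ∨ j < 0 → F i j = 0
  /-- `F(z,0) = z`, so that `F(z,w) = z + w + O(zw)` using commutativity. -/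
  F_modw : ∀ i : ℤ, F i 0 = if i = 1 then 1 else 0
  F_comm : ∀ i j : ℤ, F i j = F j i
  /-- associativity `F(F(z,w),v) = F(z,F(w,v))`, coefficient-wise. -/
  F_assoc : ∀ a b c : ℤ,
    (∑ᶠ m : ℕ, F (m : ℤ) c * pow2 F m a b) = ∑ᶠ n : ℕ, F a (n : ℤ) * pow2 F n b c
  /-- the inverse `ι(z) = -z + O(z²)`. -/
  inv : ℤ → R
  inv_supp : ∀ n : ℤ, n < 1 → inv n = 0
  inv_one : inv 1 = -1
  /-- `F(z, ι(z)) = 0`, coefficient-wise. -/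
  inv_eq : ∀ n : ℤ, (∑ᶠ p : ℤ × ℕ, F p.1 (p.2 : ℤ) * pow1 inv p.2 (n - p.1)) = 0

namespace FormalGroupLaw

variable {R : Type*} [CommRing R] {M : Type*} [AddCommGroup M] [Module R M]

/-- The series `F(z, ι(w))`. -/
def Fzi (𝓕 : FormalGroupLaw R) : ℤ → ℤ → R :=
  fun i j => ∑ᶠ m : ℕ, 𝓕.F i (m : ℤ) * pow1 𝓕.inv m j

/-- The `F`-delta distribution `z⁻¹δ_F(w/z) = i_{z,w}F(z,ιw)⁻¹ - i_{w,z}F(z,ιw)⁻¹`. -/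
def delta (𝓕 : FormalGroupLaw R) : ℤ → ℤ → R :=
  fun a b => izwPow 𝓕.Fzi (-1) a b - iwzPowNeg 𝓕.Fzi (-1) a b

/-- `p_F(z) = F^{0,1}(z,0)⁻¹`, the coefficient series of the invariant 1-form. -/
def pF (𝓕 : FormalGroupLaw R) : ℤ → R := invOne (fun i => 𝓕.F i 1)

/-- `F`-residue: the coefficient of `z⁻¹` in `f(z)·p_F(z)`. -/
def resF (𝓕 : FormalGroupLaw R) (f : ℤ → M) : M := ∑ᶠ i : ℤ, 𝓕.pF i • f (-1 - i)

/-- The `F`-hyperderivative `𝒮^F_n f`, defined by `i_{z,w}f(F(z,w)) = ∑_n (𝒮^F_n f)(z) wⁿ`. -/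
def hyper (𝓕 : FormalGroupLaw R) (n : ℕ) (f : ℤ → R) : ℤ → R :=
  fun a => ∑ᶠ m : ℤ, f m * izwPow 𝓕.F m a (n : ℤ)

/-- `F`-binomial coefficients: `i_{z,w}F(z,w)^n = ∑_{i,j} binomF(n;i,j) z^i w^j`. -/
def binomF (𝓕 : FormalGroupLaw R) (n i j : ℤ) : R := izwPow 𝓕.F n i j

/-- `φ` is a logarithm of `F`: `φ(F(z,w)) = φ(z) + φ(w)`, `φ(0) = 0`, `φ'(0) = 1`. -/
def IsLogarithm (𝓕 : FormalGroupLaw R) (φ : ℤ → R) : Prop :=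
  (∀ n : ℤ, n < 0 → φ n = 0) ∧ φ 0 = 0 ∧ φ 1 = 1 ∧
  ∀ a b : ℤ, (∑ᶠ m : ℕ, φ (m : ℤ) * pow2 𝓕.F m a b)
    = (if b = 0 then φ a else 0) + (if a = 0 then φ b else 0)

end FormalGroupLaw

section Vertex

variable {R : Type*} [CommRing R] {V : Type*} [AddCommGroup V] [Module R V]

/-- For `c = ∑_m c_m v^m ∈ V((v))`, the substitution `v ↦ F(z,w)` (coefficient `(k,n)` of
`z^k w^n`, expanded in `V((z))⟦w⟧`). -/
def substF (𝓕 : FormalGroupLaw R) (c : ℤ → V) : ℤ → ℤ → V :=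
  fun k n => ∑ᶠ m : ℤ, izwPow 𝓕.F m k n • c m

/-- Coefficients of `i_{z,w} Y(a, F(z,w)) (Y(b,w)c)`, where `Ya v = Y(a,·)v` and
`d = Y(b,·)c`. -/
def substFProd (𝓕 : FormalGroupLaw R) (Ya : V → ℤ → V) (d : ℤ → V) : ℤ → ℤ → V :=
  fun k n => ∑ᶠ q : ℤ × ℤ, izwPow 𝓕.F q.1 k (n - q.2) • Ya (d q.2) q.1

end Vertex

/-- A vertex `F`-algebra `(V, 𝟙, 𝒮, Y)` over the formal group law `𝓕`.
`Y a b : ℤ → V` records the coefficients of `Y(a,z)b = ∑_k (Y a b k) z^k`, and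
`S n` is the component `𝒮⁽ⁿ⁾` of the `F`-shift operator `𝒮(z) = ∑_{n≥0} 𝒮⁽ⁿ⁾ zⁿ`. -/
structure VertexFAlgebra (R : Type*) [CommRing R] (𝓕 : FormalGroupLaw R)
    (V : Type*) [AddCommGroup V] [Module R V] where
  vac : V
  S : ℕ → V →ₗ[R] V
  Y : V →ₗ[R] V →ₗ[R] (ℤ → V)
  /-- `Y(a,z)b ∈ V((z))`. -/
  Y_laurent : ∀ a b : V, IsLaurent (Y a b)
  /-- `Y(a,z)𝟙` is holomorphic. -/
  vac_holo : ∀ (a : V) (k : ℤ), k < 0 → Y a vac k = 0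
  /-- `Y(a,z)𝟙|_{z=0} = a`. -/
  creation : ∀ a : V, Y a vac 0 = a
  /-- `Y(𝟙,z) = id`. -/
  Y_vac : ∀ (b : V) (k : ℤ), Y vac b k = if k = 0 then b else 0
  /-- `𝒮(0) = id`. -/
  S_zero : S 0 = LinearMap.id
  /-- `𝒮(z)𝟙 = 𝟙`. -/
  S_vac : ∀ n : ℕ, 1 ≤ n → S n vac = 0
  /-- `𝒮(z) ∘ 𝒮(w) = 𝒮(F(z,w))`, coefficient-wise. -/
  S_comp : ∀ (a : V) (i j : ℕ),
    S i (S j a) = ∑ᶠ m : ℕ, pow2 𝓕.F m (i : ℤ) (j : ℤ) • S m a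
  /-- `F`-translation covariance `Y(𝒮(w)a, z)b = i_{z,w} Y(a,F(z,w))b`. -/
  translation : ∀ (a b : V) (k : ℤ) (n : ℕ),
    Y (S n a) b k = substF 𝓕 (Y a b) k (n : ℤ)
  /-- weak `F`-associativity. -/
  weak_assoc : ∀ a b c : V, ∃ N : ℕ,
    mulS2 (pow2 𝓕.F N) (fun k l => Y (Y a b k) c l)
      = mulS2 (pow2 𝓕.F N) (substFProd 𝓕 (fun v => Y a v) (Y b c))
  /-- skew symmetry `Y(a,z)b = 𝒮(z)(Y(b,ι(z))a)`, coefficient-wise. -/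
  skew : ∀ (a b : V) (k : ℤ),
    Y a b k = ∑ᶠ q : ℕ × ℤ, iotaPow 𝓕.inv q.2 (k - (q.1 : ℤ)) • S q.1 (Y b a q.2)

end

namespace FormalSeries

open MvPowerSeries (HasSubst)
open PowerSeries

variable {R : Type*} [CommRing R]

/-- The coefficient function `f` vanishes at negative indices. -/
def Supp (f : ℤ → R) : Prop := ∀ n : ℤ, n < 0 → f n = 0

/-- The coefficient function `f` vanishes when one of the indices is negative. -/
def Supp2 (f : ℤ → ℤ → R) : Prop := ∀ i j : ℤ, i < 0 ∨ j < 0 → f i j = 0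

/-- The power series with coefficients `f n`, `n ≥ 0`. -/
noncomputable def ser (f : ℤ → R) : R⟦X⟧ := PowerSeries.mk fun n => f n

/-- The power series in two variables with coefficients `f i j`, `i, j ≥ 0`. -/
noncomputable def ser2 (f : ℤ → ℤ → R) : MvPowerSeries (Fin 2) R := fun e => f (e 0) (e 1)

@[simp] theorem coeff_ser (f : ℤ → R) (n : ℕ) : coeff n (ser f) = f n := coeff_mk _ _

@[simp] theorem coeff_ser2 (f : ℤ → ℤ → R) (e : Fin 2 →₀ ℕ) :
    MvPowerSeries.coeff e (ser2 f) = f (e 0) (e 1) := rfl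

@[simp] theorem constantCoeff_ser (f : ℤ → R) : constantCoeff (ser f) = f 0 := by
  rw [← coeff_zero_eq_constantCoeff_apply, coeff_ser, Nat.cast_zero]

@[simp] theorem constantCoeff_ser2 (f : ℤ → ℤ → R) :
    MvPowerSeries.constantCoeff (ser2 f) = f 0 0 := by
  rw [← MvPowerSeries.coeff_zero_eq_constantCoeff_apply]
  simp

/-- The exponent `(a, b)`. -/
noncomputable def expo (a b : ℕ) : Fin 2 →₀ ℕ := Finsupp.equivFunOnFinite.symm ![a, b]

@[simp] theorem expo_zero (a b : ℕ) : expo a b 0 = a := rfl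

@[simp] theorem expo_one (a b : ℕ) : expo a b 1 = b := rfl

theorem expo_ext {e e' : Fin 2 →₀ ℕ} (h0 : e 0 = e' 0) (h1 : e 1 = e' 1) : e = e' := by
  ext i
  fin_cases i <;> assumption

theorem ser_injective {f g : ℤ → R} (hf : Supp f) (hg : Supp g) (h : ser f = ser g) : f = g := by
  funext n
  rcases lt_or_ge n 0 with hn | hn
  · rw [hf n hn, hg n hn]
  · lift n to ℕ using hn
    simpa using congrArg (coeff n) h

theorem ser2_injective {f g : ℤ → ℤ → R} (hf : Supp2 f) (hg : Supp2 g) (h : ser2 f = ser2 g) :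
    f = g := by
  funext a b
  by_cases hn : a < 0 ∨ b < 0
  · rw [hf a b hn, hg a b hn]
  · push Not at hn
    obtain ⟨ha, hb⟩ := hn
    lift a to ℕ using ha
    lift b to ℕ using hb
    simpa using congrArg (MvPowerSeries.coeff (expo a b)) h

theorem supp_oneS : Supp (oneS R) := fun _ hn => if_neg hn.ne

theorem supp2_oneS2 : Supp2 (oneS2 R) := fun a b h => if_neg (by omega)

theorem Supp.mulS {f g : ℤ → R} (hf : Supp f) (hg : Supp g) : Supp (mulS f g) := by
  intro n hn
  refine finsum_eq_zero_of_forall_eq_zero fun i => ?_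
  rcases lt_or_ge i 0 with hi | hi
  · rw [hf i hi, zero_smul]
  · rw [hg (n - i) (by omega), smul_zero]

theorem Supp2.mulS2 {f g : ℤ → ℤ → R} (hf : Supp2 f) (hg : Supp2 g) : Supp2 (mulS2 f g) := by
  intro a b hn
  refine finsum_eq_zero_of_forall_eq_zero fun i => ?_
  by_cases hi : i.1 < 0 ∨ i.2 < 0
  · rw [hf _ _ hi, zero_smul]
  · rw [hg _ _ (by omega), smul_zero]

theorem Supp.pow1 {f : ℤ → R} (hf : Supp f) (k : ℕ) : Supp (pow1 f k) := by
  induction k with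
  | zero => exact supp_oneS
  | succ k ih => exact hf.mulS ih

theorem Supp2.pow2 {f : ℤ → ℤ → R} (hf : Supp2 f) (k : ℕ) : Supp2 (pow2 f k) := by
  induction k with
  | zero => exact supp2_oneS2
  | succ k ih => exact hf.mulS2 ih

theorem Supp.comp1 (p : ℤ → R) {f : ℤ → R} (hf : Supp f) : Supp (comp1 p f) := fun n hn =>
  finsum_eq_zero_of_forall_eq_zero fun m => by rw [hf.pow1 m n hn, mul_zero]

theorem Supp2.comp2 (p : ℤ → R) {f : ℤ → ℤ → R} (hf : Supp2 f) : Supp2 (comp2 p f) :=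
  fun a b hn => finsum_eq_zero_of_forall_eq_zero fun m => by rw [hf.pow2 m a b hn, mul_zero]

theorem Supp.fderiv1 {f : ℤ → R} (hf : Supp f) : Supp (fderiv1 f) := by
  intro n hn
  unfold _root_.fderiv1
  rcases eq_or_ne n (-1) with rfl | h
  · simp
  · rw [hf _ (by omega), mul_zero]

theorem Supp2.d10 {f : ℤ → ℤ → R} (hf : Supp2 f) : Supp2 (d10 f) := by
  intro a b hn
  unfold _root_.d10
  rcases eq_or_ne a (-1) with rfl | h
  · simp
  · rw [hf _ _ (by omega), mul_zero]

theorem Supp2.d01 {f : ℤ → ℤ → R} (hf : Supp2 f) : Supp2 (d01 f) := by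
  intro a b hn
  unfold _root_.d01
  rcases eq_or_ne b (-1) with rfl | h
  · simp
  · rw [hf _ _ (by omega), mul_zero]

theorem Supp.right {p : ℤ → R} (hp : Supp p) : Supp2 (fun a b => if a = 0 then p b else 0) := by
  intro a b h
  dsimp only
  split_ifs with hb
  · exact hp b (by omega)
  · rfl

@[simp] theorem ser_oneS : ser (oneS R) = 1 := by
  ext n
  simp [oneS, coeff_one]

@[simp] theorem ser2_oneS2 : ser2 (oneS2 R) = 1 := by
  classical
  ext e
  have : e = 0 ↔ e 0 = 0 ∧ e 1 = 0 :=
    ⟨fun h => by simp [h], fun h => expo_ext h.1 h.2⟩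
  simp [oneS2, MvPowerSeries.coeff_one, this]

theorem ser_mulS {f g : ℤ → R} (hf : Supp f) (hg : Supp g) :
    ser (mulS f g) = ser f * ser g := by
  classical
  ext n
  rw [coeff_mul, coeff_ser]
  unfold mulS
  rw [finsum_eq_sum_of_support_subset
    (s := (Finset.HasAntidiagonal.antidiagonal n).image fun p => (p.1 : ℤ))]
  · rw [Finset.sum_image]
    · refine Finset.sum_congr rfl fun p hp => ?_
      rw [Finset.HasAntidiagonal.mem_antidiagonal] at hp
      simp [← hp]
    · intro p hp q hq h
      simp only [Finset.mem_coe, Finset.HasAntidiagonal.mem_antidiagonal] at hp hq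
      ext <;> grind
  · intro i hi
    simp only [Finset.coe_image, Set.mem_image, Finset.mem_coe,
      Finset.HasAntidiagonal.mem_antidiagonal]
    by_contra hcon
    refine hi ?_
    rcases lt_or_ge i 0 with h | h
    · simp [hf i h]
    · rcases lt_or_ge (n - i : ℤ) 0 with h' | h'
      · simp [hg _ h']
      · exact absurd ⟨(i.toNat, n - i.toNat), by simp; omega, by simp; omega⟩ hcon

theorem ser2_mulS2 {f g : ℤ → ℤ → R} (hf : Supp2 f) (hg : Supp2 g) :
    ser2 (mulS2 f g) = ser2 f * ser2 g := by
  classical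
  ext n
  rw [MvPowerSeries.coeff_mul, coeff_ser2]
  unfold mulS2
  rw [finsum_eq_sum_of_support_subset
    (s := (Finset.HasAntidiagonal.antidiagonal n).image fun p => ((p.1 0 : ℤ), (p.1 1 : ℤ)))]
  · rw [Finset.sum_image]
    · refine Finset.sum_congr rfl fun p hp => ?_
      rw [Finset.HasAntidiagonal.mem_antidiagonal] at hp
      simp [← hp]
    · intro p hp q hq h
      simp only [Finset.mem_coe, Finset.HasAntidiagonal.mem_antidiagonal] at hp hq
      simp only [Prod.mk.injEq, Nat.cast_inj] at h
      have h1 : p.1 = q.1 := expo_ext h.1 h.2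
      refine Prod.ext h1 ?_
      rw [← hq, h1] at hp
      exact add_left_cancel hp
  · rintro ⟨i, j⟩ hi
    simp only [Finset.coe_image, Set.mem_image, Finset.mem_coe,
      Finset.HasAntidiagonal.mem_antidiagonal]
    by_contra hcon
    refine hi ?_
    by_cases h : i < 0 ∨ j < 0
    · simp [hf i j h]
    · by_cases h' : (n 0 - i : ℤ) < 0 ∨ (n 1 - j : ℤ) < 0
      · simp [hg _ _ h']
      · refine absurd ⟨(expo i.toNat j.toNat, expo (n 0 - i.toNat) (n 1 - j.toNat)),
          expo_ext ?_ ?_, Prod.ext ?_ ?_⟩ hcon <;> simp <;> omega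

theorem ser_pow1 {f : ℤ → R} (hf : Supp f) (k : ℕ) : ser (pow1 f k) = ser f ^ k := by
  induction k with
  | zero => rw [pow_zero]; exact ser_oneS
  | succ k ih => rw [pow_succ', ← ih]; exact ser_mulS hf (hf.pow1 k)

theorem ser2_pow2 {f : ℤ → ℤ → R} (hf : Supp2 f) (k : ℕ) : ser2 (pow2 f k) = ser2 f ^ k := by
  induction k with
  | zero => rw [pow_zero]; exact ser2_oneS2
  | succ k ih => rw [pow_succ', ← ih]; exact ser2_mulS2 hf (hf.pow2 k)

theorem ser_comp1 (p : ℤ → R) {f : ℤ → R} (hf : Supp f) (h0 : f 0 = 0) :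
    ser (comp1 p f) = (ser p).subst (ser f) := by
  ext n
  rw [coeff_subst' (PowerSeries.HasSubst.of_constantCoeff_zero' (by simp [h0])), coeff_ser]
  refine finsum_congr fun m => ?_
  rw [← ser_pow1 hf, coeff_ser, coeff_ser, smul_eq_mul]

theorem ser2_comp2 (p : ℤ → R) {f : ℤ → ℤ → R} (hf : Supp2 f) (h0 : f 0 0 = 0) :
    ser2 (comp2 p f) = (ser p).subst (ser2 f) := by
  ext e
  rw [coeff_subst (PowerSeries.HasSubst.of_constantCoeff_zero (by simp [h0])), coeff_ser2]
  refine finsum_congr fun m => ?_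
  rw [← ser2_pow2 hf, coeff_ser, coeff_ser2, smul_eq_mul]

theorem ser_fderiv1 (f : ℤ → R) : ser (fderiv1 f) = d⁄dX R (ser f) := by
  ext n
  rw [coeff_derivative, coeff_ser, coeff_ser, mul_comm]
  simp [fderiv1]

theorem ser2_d10 (f : ℤ → ℤ → R) : ser2 (d10 f) = MvPowerSeries.pderiv R 0 (ser2 f) := by
  ext e
  rw [MvPowerSeries.coeff_pderiv, coeff_ser2, coeff_ser2, mul_comm]
  simp [d10]

theorem ser2_d01 (f : ℤ → ℤ → R) : ser2 (d01 f) = MvPowerSeries.pderiv R 1 (ser2 f) := by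
  ext e
  rw [MvPowerSeries.coeff_pderiv, coeff_ser2, coeff_ser2, mul_comm]
  simp [d01]

theorem ser2_left (p : ℤ → R) :
    ser2 (fun a b => if b = 0 then p a else 0) = (ser p).subst (MvPowerSeries.X (0 : Fin 2)) := by
  ext e
  have : e = Finsupp.single 0 (e 0) ↔ e 1 = 0 :=
    ⟨fun h => by rw [h]; simp, fun h => expo_ext (by simp) (by simp [h])⟩
  simp [coeff_subst_single, this]

theorem ser2_right (p : ℤ → R) :
    ser2 (fun a b => if a = 0 then p b else 0) = (ser p).subst (MvPowerSeries.X (1 : Fin 2)) := by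
  ext e
  have : e = Finsupp.single 1 (e 1) ↔ e 0 = 0 :=
    ⟨fun h => by rw [h]; simp, fun h => expo_ext (by simp [h]) (by simp)⟩
  simp [coeff_subst_single, this]

theorem supp_invOne {f : ℤ → R} (hf : Supp f) : Supp (invOne f) := by
  have h : Supp (hOneS f) := fun n hn => by simp [hOneS, hf n hn, supp_oneS n hn]
  exact fun n hn => finsum_eq_zero_of_forall_eq_zero fun k => by rw [h.pow1 k n hn, mul_zero]

theorem ser_mul_ser_invOne {f : ℤ → R} (hf : Supp f) (h0 : f 0 = 1) :
    ser f * ser (invOne f) = 1 := by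
  have hs : Supp (hOneS f) := fun n hn => by simp [hOneS, hf n hn, supp_oneS n hn]
  have hs0 : hOneS f 0 = 0 := by simp [hOneS, oneS, h0]
  have hsub : PowerSeries.HasSubst (ser (hOneS f)) :=
    PowerSeries.HasSubst.of_constantCoeff_zero' (by simp [hs0])
  have h1 : invOne f = comp1 (fun n => (-1) ^ n.toNat) (hOneS f) := by
    funext a
    simp [invOne, comp1]
  have h2 : ser (hOneS f) = ser f - 1 := by
    rw [← ser_oneS]
    ext n
    rw [map_sub, coeff_ser, coeff_ser, coeff_ser]
    rfl
  have h3 : (1 + X) * ser (fun n => (-1 : R) ^ n.toNat) = 1 := by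
    ext n
    rcases n with - | n
    · simp
    · simp [add_mul, coeff_succ_X_mul, pow_succ, coeff_one]
  have h4 : (1 + X : R⟦X⟧).subst (ser (hOneS f)) = ser f := by
    rw [← coe_substAlgHom hsub, map_add, map_one, coe_substAlgHom, subst_X hsub, h2]
    ring
  rw [h1, ser_comp1 _ hs hs0, ← h4, ← subst_mul hsub, h3, ← coe_substAlgHom hsub, map_one]

theorem hasSubst_of_X_dvd {a : Fin 2 → R⟦X⟧} (ha : ∀ i, X ∣ a i) : HasSubst a :=
  MvPowerSeries.hasSubst_of_constantCoeff_zero fun i => X_dvd_iff.mp (ha i)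

theorem exists_eq_C_add_X_mul_add_X_mul (f : MvPowerSeries (Fin 2) R) :
    ∃ c g h, f = MvPowerSeries.C c + MvPowerSeries.X 0 * g + MvPowerSeries.X 1 * h := by
  classical
  obtain ⟨g, hg⟩ : ∃ g : MvPowerSeries (Fin 2) R, ∀ e, MvPowerSeries.coeff e g =
    MvPowerSeries.coeff (e + Finsupp.single 0 1) f := ⟨fun e => _, fun _ => rfl⟩
  obtain ⟨h, hh⟩ : ∃ h : MvPowerSeries (Fin 2) R, ∀ e, MvPowerSeries.coeff e h =
    if e 0 = 0 then MvPowerSeries.coeff (e + Finsupp.single 1 1) f else 0 :=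
    ⟨fun e => _, fun _ => rfl⟩
  refine ⟨MvPowerSeries.constantCoeff f, g, h, ?_⟩
  ext e
  have key (s : Fin 2) (g : MvPowerSeries (Fin 2) R) :
      MvPowerSeries.coeff e (MvPowerSeries.X s * g) =
        if e s = 0 then 0 else MvPowerSeries.coeff (e - Finsupp.single s 1) g := by
    rw [MvPowerSeries.X, MvPowerSeries.coeff_monomial_mul, one_mul]
    simp only [Finsupp.single_le_iff, Nat.one_le_iff_ne_zero, ite_not]
  have hz : e = 0 ↔ e 0 = 0 ∧ e 1 = 0 := ⟨fun h => by simp [h], fun h => expo_ext h.1 h.2⟩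
  have hsub (s : Fin 2) (h : e s ≠ 0) : e - Finsupp.single s 1 + Finsupp.single s 1 = e :=
    tsub_add_cancel_of_le (Finsupp.single_le_iff.mpr (Nat.one_le_iff_ne_zero.mpr h))
  rw [map_add, map_add, key, key, MvPowerSeries.coeff_C]
  by_cases he0 : e 0 = 0
  · by_cases he1 : e 1 = 0
    · rw [if_pos (hz.mpr ⟨he0, he1⟩), if_pos he0, if_pos he1, add_zero, add_zero,
        hz.mpr ⟨he0, he1⟩, MvPowerSeries.coeff_zero_eq_constantCoeff_apply]
    · rw [if_neg (by simp [hz, he1]), if_pos he0, if_neg he1, zero_add, zero_add,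
        hh, if_pos (by simp [he0]), hsub 1 he1]
  · rw [if_neg (by simp [hz, he0]), if_neg he0, hg, hsub 0 he0]
    split_ifs with he1
    · ring
    · rw [hh, if_neg (by simp [he0])]
      ring

/-- The chain rule for substituting two power series in one variable. -/
theorem derivative_subst_fin_two {a : Fin 2 → R⟦X⟧} (ha : ∀ i, X ∣ a i)
    (f : MvPowerSeries (Fin 2) R) :
    d⁄dX R (MvPowerSeries.subst a f) =
      MvPowerSeries.subst a (MvPowerSeries.pderiv R 0 f) * d⁄dX R (a 0) +
      MvPowerSeries.subst a (MvPowerSeries.pderiv R 1 f) * d⁄dX R (a 1) := by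
  have hs := hasSubst_of_X_dvd ha
  simp only [← MvPowerSeries.coe_substAlgHom hs]
  set φ : MvPowerSeries (Fin 2) R →ₐ[R] R⟦X⟧ := MvPowerSeries.substAlgHom hs with hφ
  have hX (i) : φ (MvPowerSeries.X i) = a i := MvPowerSeries.substAlgHom_X hs i
  have hC (c : R) : φ (MvPowerSeries.C c) = C c := φ.commutes c
  let D (f : MvPowerSeries (Fin 2) R) : R⟦X⟧ := d⁄dX R (φ f) -
    (φ (MvPowerSeries.pderiv R 0 f) * d⁄dX R (a 0) + φ (MvPowerSeries.pderiv R 1 f) * d⁄dX R (a 1))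
  have hD (c : R) (g h : MvPowerSeries (Fin 2) R) :
      D (MvPowerSeries.C c + MvPowerSeries.X 0 * g + MvPowerSeries.X 1 * h) =
        a 0 * D g + a 1 * D h := by
    simp only [D, map_add, map_mul, hX, hC, Derivation.leibniz, smul_eq_mul, derivative_C,
      MvPowerSeries.pderiv_C, map_zero, MvPowerSeries.pderiv_X_self, map_one,
      MvPowerSeries.pderiv_X_of_ne (R := R) (show (1 : Fin 2) ≠ 0 by decide),
      MvPowerSeries.pderiv_X_of_ne (R := R) (show (0 : Fin 2) ≠ 1 by decide)]
    ring
  have hdvd (n : ℕ) : ∀ f, X ^ n ∣ D f := by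
    induction n with
    | zero => simp
    | succ n ih =>
      intro f
      obtain ⟨c, g, h, rfl⟩ := exists_eq_C_add_X_mul_add_X_mul f
      rw [hD, pow_succ']
      exact dvd_add (mul_dvd_mul (ha 0) (ih g)) (mul_dvd_mul (ha 1) (ih h))
  refine sub_eq_zero.mp (show D f = 0 from ?_)
  ext n
  exact X_pow_dvd_iff.mp (hdvd (n + 1) f) n n.lt_succ_self

theorem subst_subst_fin_two {a : Fin 2 → R⟦X⟧} (ha : ∀ i, X ∣ a i) {g : MvPowerSeries (Fin 2) R}
    (hg : MvPowerSeries.constantCoeff g = 0) (f : R⟦X⟧) :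
    MvPowerSeries.subst a (f.subst g) = f.subst (MvPowerSeries.subst a g) :=
  MvPowerSeries.subst_comp_subst_apply (PowerSeries.HasSubst.of_constantCoeff_zero hg).const
    (hasSubst_of_X_dvd ha) f

theorem coeff_subst_fin_two {a : Fin 2 → R⟦X⟧} (ha : ∀ i, X ∣ a i) (f : MvPowerSeries (Fin 2) R)
    (n : ℕ) : coeff n (MvPowerSeries.subst a f : R⟦X⟧) =
      ∑ᶠ e : Fin 2 →₀ ℕ, MvPowerSeries.coeff e f * coeff n (a 0 ^ e 0 * a 1 ^ e 1) := by
  rw [PowerSeries.coeff, MvPowerSeries.coeff_subst (hasSubst_of_X_dvd ha)]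
  refine finsum_congr fun e => ?_
  rw [Finsupp.prod_fintype _ _ (fun i => pow_zero _), Fin.prod_univ_two, smul_eq_mul]

theorem X_dvd_X_zero (i : Fin 2) : (X : R⟦X⟧) ∣ ![(X : R⟦X⟧), 0] i := by
  fin_cases i <;> simp

/-- Setting the second variable to zero. -/
theorem coeff_subst_X_zero (f : MvPowerSeries (Fin 2) R) (n : ℕ) :
    coeff n (MvPowerSeries.subst ![(X : R⟦X⟧), 0] f : R⟦X⟧) =
      MvPowerSeries.coeff (expo n 0) f := by
  rw [coeff_subst_fin_two X_dvd_X_zero, finsum_eq_single _ (expo n 0)]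
  · simp
  · intro e he
    by_cases h1 : e 1 = 0
    · have h0 : n ≠ e 0 := fun h => he (expo_ext h.symm h1)
      simp [h1, coeff_X_pow, h0]
    · simp [h1]

theorem coeff_subst_X_zero_pderiv (f : MvPowerSeries (Fin 2) R) (n : ℕ) :
    coeff n (MvPowerSeries.subst ![(X : R⟦X⟧), 0] (MvPowerSeries.pderiv R 1 f) : R⟦X⟧) =
      MvPowerSeries.coeff (expo n 1) f := by
  have : expo n 0 + Finsupp.single 1 1 = expo n 1 := expo_ext (by simp) (by simp)
  rw [coeff_subst_X_zero, MvPowerSeries.coeff_pderiv, this]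
  simp

theorem mulS2_right {f : ℤ → ℤ → R} {p : ℤ → R} (hf : Supp2 f) (hp : Supp p) (a : ℤ) (b : ℕ) :
    mulS2 f (fun a b => if a = 0 then p b else 0) a b =
      ∑ j ∈ Finset.range (b + 1), f a j * p (b - j) := by
  unfold mulS2
  rw [finsum_eq_sum_of_support_subset
    (s := (Finset.range (b + 1)).image fun j : ℕ => (a, (j : ℤ)))]
  · rw [Finset.sum_image (by intro i _ j _ h; simpa using h)]
    simp
  · rintro ⟨i, j⟩ hij
    simp only [Finset.coe_image, Set.mem_image, Finset.mem_coe, Finset.mem_range]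
    by_contra hcon
    refine hij ?_
    by_cases hi : a - i = 0
    · rcases lt_or_ge j 0 with hj | hj
      · simp [hf i j (Or.inr hj)]
      · rcases lt_or_ge (b - j : ℤ) 0 with hj' | hj'
        · simp [hp _ hj']
        · exact absurd ⟨j.toNat, by omega, Prod.ext (by simp; omega) (by simp; omega)⟩ hcon
    · simp [hi]

theorem mulS2_swap (f g : ℤ → ℤ → R) (a b : ℤ) :
    mulS2 (fun i j => f j i) (fun i j => g j i) a b = mulS2 f g b a :=
  finsum_comp_equiv (Equiv.prodComm ℤ ℤ) (f := fun p => f p.1 p.2 • g (b - p.1) (a - p.2))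

theorem pow2_swap {f : ℤ → ℤ → R} (hf : ∀ i j, f i j = f j i) (k : ℕ) (a b : ℤ) :
    pow2 f k a b = pow2 f k b a := by
  induction k generalizing a b with
  | zero => simp only [pow2, oneS2, and_comm]
  | succ k ih =>
    have h1 : (fun i j => f j i) = f := funext₂ fun i j => hf j i
    have h2 : (fun i j => pow2 f k j i) = pow2 f k := funext₂ fun i j => ih j i
    have := mulS2_swap f (pow2 f k) a b
    rwa [h1, h2] at this

end FormalSeries

namespace FormalGroupLaw

open PowerSeries FormalSeries

variable {R : Type*} [CommRing R] (𝓕 : FormalGroupLaw R)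

theorem supp2_F : Supp2 𝓕.F := 𝓕.F_supp

theorem F_zero_zero : 𝓕.F 0 0 = 0 := by simp [𝓕.F_modw]

theorem constantCoeff_F : MvPowerSeries.constantCoeff (ser2 𝓕.F) = 0 := by
  simp [𝓕.F_zero_zero]

theorem supp_F_one : Supp fun i => 𝓕.F i 1 := fun i hi => 𝓕.F_supp i 1 (Or.inl hi)

theorem F_zero_one : 𝓕.F 0 1 = 1 := by simp [𝓕.F_comm 0 1, 𝓕.F_modw]

/-- `F(z, 0) = z`. -/
theorem subst_X_zero_F : MvPowerSeries.subst ![(X : R⟦X⟧), 0] (ser2 𝓕.F) = (X : R⟦X⟧) := by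
  refine PowerSeries.ext fun n => ?_
  rw [coeff_subst_X_zero, coeff_X]
  simp [𝓕.F_modw]

theorem subst_X_zero_pderiv_F :
    MvPowerSeries.subst ![(X : R⟦X⟧), 0] (MvPowerSeries.pderiv R 1 (ser2 𝓕.F)) =
      ser fun i => 𝓕.F i 1 := by
  refine PowerSeries.ext fun n => ?_
  rw [coeff_subst_X_zero_pderiv]
  simp

theorem pow2_F_one (n b : ℕ) :
    pow2 𝓕.F n b 1 = if n - 1 ≤ b then n * 𝓕.F (b - (n - 1 : ℕ)) 1 else 0 := by
  have h : pow2 𝓕.F n b 1 = MvPowerSeries.coeff (expo b 1) (ser2 𝓕.F ^ n) := by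
    rw [← ser2_pow2 𝓕.supp2_F]
    simp
  have hs := hasSubst_of_X_dvd (X_dvd_X_zero (R := R))
  have e : (MvPowerSeries.subst ![(X : R⟦X⟧), 0]
      (MvPowerSeries.pderiv R 1 (ser2 𝓕.F ^ n)) : R⟦X⟧) =
      C (n : R) * (X ^ (n - 1) * ser fun i => 𝓕.F i 1) := by
    rw [MvPowerSeries.pderiv_pow, mul_assoc, MvPowerSeries.subst_mul hs, MvPowerSeries.subst_mul hs,
      MvPowerSeries.subst_pow hs, 𝓕.subst_X_zero_F, 𝓕.subst_X_zero_pderiv_F,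
      ← MvPowerSeries.coe_substAlgHom hs, map_natCast, map_natCast]
  rw [h, ← coeff_subst_X_zero_pderiv, e, coeff_C_mul, coeff_X_pow_mul']
  split_ifs with hb
  · rw [coeff_ser, Nat.cast_sub hb]
  · rw [mul_zero]

/-- Differentiating associativity in the third variable at zero. -/
theorem comp2_F_one :
    comp2 (fun i => 𝓕.F i 1) 𝓕.F =
      mulS2 (d01 𝓕.F) (fun a b => if a = 0 then 𝓕.F b 1 else 0) := by
  have hr : Supp2 fun a b : ℤ => if a = 0 then 𝓕.F b 1 else 0 := 𝓕.supp_F_one.right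
  funext a b
  by_cases hn : a < 0 ∨ b < 0
  · rw [𝓕.supp2_F.comp2 _ a b hn, 𝓕.supp2_F.d01.mulS2 hr a b hn]
  push Not at hn
  obtain ⟨-, hb⟩ := hn
  lift b to ℕ using hb
  rw [mulS2_right 𝓕.supp2_F.d01 𝓕.supp_F_one]
  refine (𝓕.F_assoc a b 1).trans ?_
  simp only [pow2_F_one]
  rw [finsum_eq_sum_of_support_subset (s := Finset.range (b + 2)), Finset.sum_range_succ']
  · simp only [Nat.cast_zero, zero_mul, ite_self, mul_zero, add_zero]
    refine Finset.sum_congr rfl fun j hj => ?_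
    rw [Finset.mem_range] at hj
    rw [if_pos (by omega)]
    simp only [d01, Nat.add_sub_cancel]
    push_cast
    ring
  · intro n hn
    by_contra hcon
    simp only [Finset.coe_range, Set.mem_Iio, not_lt] at hcon
    exact hn (by dsimp only; rw [if_neg (by omega), mul_zero])

theorem supp_pF : Supp 𝓕.pF := supp_invOne 𝓕.supp_F_one

theorem ser_F_one_mul_ser_pF : ser (fun i => 𝓕.F i 1) * ser 𝓕.pF = 1 :=
  ser_mul_ser_invOne 𝓕.supp_F_one 𝓕.F_zero_one

theorem pF_zero : 𝓕.pF 0 = 1 := by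
  have h := congrArg constantCoeff 𝓕.ser_F_one_mul_ser_pF
  simpa [𝓕.F_zero_one] using h

theorem subst_pF_mul_pderiv_one :
    (ser 𝓕.pF).subst (ser2 𝓕.F) * MvPowerSeries.pderiv R 1 (ser2 𝓕.F) =
      (ser 𝓕.pF).subst (MvPowerSeries.X (1 : Fin 2)) := by
  have hF : HasSubst (ser2 𝓕.F) := HasSubst.of_constantCoeff_zero 𝓕.constantCoeff_F
  have hX : HasSubst (MvPowerSeries.X (1 : Fin 2) : MvPowerSeries (Fin 2) R) := HasSubst.X 1
  have hinv {g : MvPowerSeries (Fin 2) R} (hg : HasSubst g) :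
      (ser fun i => 𝓕.F i 1).subst g * (ser 𝓕.pF).subst g = 1 := by
    rw [← subst_mul hg, 𝓕.ser_F_one_mul_ser_pF, ← coe_substAlgHom hg, map_one]
  have h := congrArg ser2 𝓕.comp2_F_one
  rw [ser2_comp2 _ 𝓕.supp2_F 𝓕.F_zero_zero, ser2_mulS2 𝓕.supp2_F.d01 𝓕.supp_F_one.right,
    ser2_d01, ser2_right (fun b => 𝓕.F b 1)] at h
  have h1 := hinv hF
  have h2 := hinv hX
  rw [h] at h1
  linear_combination (ser 𝓕.pF).subst (MvPowerSeries.X (1 : Fin 2)) * h1 -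
    (ser 𝓕.pF).subst (ser2 𝓕.F) * MvPowerSeries.pderiv R 1 (ser2 𝓕.F) * h2

theorem mulS2_comp2_pF_d01 :
    mulS2 (comp2 𝓕.pF 𝓕.F) (d01 𝓕.F) = fun a b => if a = 0 then 𝓕.pF b else 0 := by
  refine ser2_injective ((𝓕.supp2_F.comp2 _).mulS2 𝓕.supp2_F.d01) 𝓕.supp_pF.right ?_
  rw [ser2_mulS2 (𝓕.supp2_F.comp2 _) 𝓕.supp2_F.d01, ser2_comp2 _ 𝓕.supp2_F 𝓕.F_zero_zero,
    ser2_d01, ser2_right, subst_pF_mul_pderiv_one]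

theorem mulS2_comp2_pF_d10 :
    mulS2 (comp2 𝓕.pF 𝓕.F) (d10 𝓕.F) = fun a b => if b = 0 then 𝓕.pF a else 0 := by
  funext a b
  have h1 : (fun i j => comp2 𝓕.pF 𝓕.F j i) = comp2 𝓕.pF 𝓕.F :=
    funext₂ fun i j => finsum_congr fun m => by rw [pow2_swap 𝓕.F_comm]
  have h2 : (fun i j => d01 𝓕.F j i) = d10 𝓕.F :=
    funext₂ fun i j => by simp only [d01, d10, 𝓕.F_comm j]
  have h := mulS2_swap (comp2 𝓕.pF 𝓕.F) (d01 𝓕.F) a b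
  rw [h1, h2, mulS2_comp2_pF_d01] at h
  exact h

theorem subst_pF_mul_pderiv_zero :
    (ser 𝓕.pF).subst (ser2 𝓕.F) * MvPowerSeries.pderiv R 0 (ser2 𝓕.F) =
      (ser 𝓕.pF).subst (MvPowerSeries.X (0 : Fin 2)) := by
  have h := congrArg ser2 𝓕.mulS2_comp2_pF_d10
  rwa [ser2_mulS2 (𝓕.supp2_F.comp2 _) 𝓕.supp2_F.d10, ser2_comp2 _ 𝓕.supp2_F 𝓕.F_zero_zero,
    ser2_d10, ser2_left] at h

theorem eq_pF_of_mulS2_comp2_d01 {q : ℤ → R} (hq : Supp q) (h0 : q 0 = 1)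
    (h : mulS2 (comp2 q 𝓕.F) (d01 𝓕.F) = fun a b => if a = 0 then q b else 0) : q = 𝓕.pF := by
  refine ser_injective hq 𝓕.supp_pF ?_
  have hs := hasSubst_of_X_dvd (X_dvd_X_zero (R := R))
  have h' := congrArg (fun f => (MvPowerSeries.subst ![(X : R⟦X⟧), 0] (ser2 f) : R⟦X⟧)) h
  rw [ser2_mulS2 (𝓕.supp2_F.comp2 _) 𝓕.supp2_F.d01, ser2_comp2 _ 𝓕.supp2_F 𝓕.F_zero_zero,
    ser2_d01, MvPowerSeries.subst_mul hs, subst_subst_fin_two X_dvd_X_zero 𝓕.constantCoeff_F,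
    𝓕.subst_X_zero_F, 𝓕.subst_X_zero_pderiv_F, X_subst] at h'
  have h1 : (MvPowerSeries.subst ![(X : R⟦X⟧), 0]
      (ser2 fun a b => if a = 0 then q b else 0) : R⟦X⟧) = 1 := by
    refine PowerSeries.ext fun n => ?_
    rw [coeff_subst_X_zero, coeff_one]
    simp [h0]
  rw [h1] at h'
  linear_combination ser 𝓕.pF * h' - ser q * 𝓕.ser_F_one_mul_ser_pF

theorem supp_inv : Supp 𝓕.inv := fun n hn => 𝓕.inv_supp n (by omega)

theorem inv_zero : 𝓕.inv 0 = 0 := 𝓕.inv_supp 0 one_pos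

theorem X_dvd_X_inv (i : Fin 2) : (X : R⟦X⟧) ∣ ![X, ser 𝓕.inv] i := by
  fin_cases i <;> simp [X_dvd_iff, 𝓕.inv_zero]

/-- `F(z, ι(z)) = 0`. -/
theorem subst_X_inv_F : MvPowerSeries.subst ![X, ser 𝓕.inv] (ser2 𝓕.F) = (0 : R⟦X⟧) := by
  refine PowerSeries.ext fun n => ?_
  rw [coeff_subst_fin_two 𝓕.X_dvd_X_inv, map_zero, ← 𝓕.inv_eq n]
  let g (e : Fin 2 →₀ ℕ) : ℤ × ℕ := (e 0, e 1)
  have hg : Function.Injective g := fun e e' h => by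
    simp only [g, Prod.mk.injEq, Nat.cast_inj] at h
    exact expo_ext h.1 h.2
  let f (p : ℤ × ℕ) : R := 𝓕.F p.1 p.2 * pow1 𝓕.inv p.2 (n - p.1)
  have hf : Function.support f ⊆ Set.range g := by
    rintro ⟨i, j⟩ hij
    rcases lt_or_ge i 0 with hi | hi
    · exact absurd (by simp [f, 𝓕.F_supp i j (Or.inl hi)]) hij
    · exact ⟨expo i.toNat j, Prod.ext (by simp [g, hi]) (by simp [g])⟩
  have h1 : ∑ᶠ p, f p = ∑ᶠ e, f (g e) := by
    rw [← finsum_mem_range hg, ← finsum_mem_univ]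
    exact finsum_mem_inter_support_eq' f _ _ fun x hx => by simp [hf hx]
  refine Eq.trans (finsum_congr fun e => ?_) h1.symm
  simp only [f, g, coeff_ser2, Matrix.cons_val_zero, Matrix.cons_val_one, ← ser_pow1 𝓕.supp_inv,
    coeff_X_pow_mul', coeff_ser]
  split_ifs with h
  · rw [Nat.cast_sub h]
  · rw [𝓕.supp_inv.pow1 _ (n - e 0) (by omega)]

theorem mulS_comp1_pF_inv :
    mulS (comp1 𝓕.pF 𝓕.inv) (fderiv1 𝓕.inv) = fun n => -𝓕.pF n := by
  have hneg : Supp fun n => -𝓕.pF n := fun n hn => by simp [𝓕.supp_pF n hn]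
  refine ser_injective ((𝓕.supp_inv.comp1 _).mulS 𝓕.supp_inv.fderiv1) hneg ?_
  have hneg' : ser (fun n => -𝓕.pF n) = -ser 𝓕.pF := by
    ext n
    simp
  rw [ser_mulS (𝓕.supp_inv.comp1 _) 𝓕.supp_inv.fderiv1, ser_comp1 _ 𝓕.supp_inv 𝓕.inv_zero,
    ser_fderiv1, hneg']
  have hs := hasSubst_of_X_dvd 𝓕.X_dvd_X_inv
  have hc := derivative_subst_fin_two 𝓕.X_dvd_X_inv (ser2 𝓕.F)
  have hp : ((ser 𝓕.pF).subst (0 : R⟦X⟧) : R⟦X⟧) = 1 := by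
    rw [subst_zero_eq_C_constantCoeff]
    simp [𝓕.pF_zero]
  have key (i : Fin 2) (h : (ser 𝓕.pF).subst (ser2 𝓕.F) * MvPowerSeries.pderiv R i (ser2 𝓕.F) =
      (ser 𝓕.pF).subst (MvPowerSeries.X i)) :
      (MvPowerSeries.subst ![X, ser 𝓕.inv] (MvPowerSeries.pderiv R i (ser2 𝓕.F)) : R⟦X⟧) =
        (ser 𝓕.pF).subst (![X, ser 𝓕.inv] i) := by
    have h' := congrArg (fun f => (MvPowerSeries.subst ![X, ser 𝓕.inv] f : R⟦X⟧)) h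
    rwa [MvPowerSeries.subst_mul hs, subst_subst_fin_two 𝓕.X_dvd_X_inv 𝓕.constantCoeff_F,
      subst_subst_fin_two 𝓕.X_dvd_X_inv (by simp), 𝓕.subst_X_inv_F, hp, one_mul,
      MvPowerSeries.subst_X hs] at h'
  rw [𝓕.subst_X_inv_F, key 0 𝓕.subst_pF_mul_pderiv_zero, key 1 𝓕.subst_pF_mul_pderiv_one] at hc
  simp only [map_zero, Matrix.cons_val_zero, Matrix.cons_val_one, derivative_X, mul_one,
    X_subst] at hc
  linear_combination -hc

end FormalGroupLaw

/-- `p_F(z) = F^{0,1}(z,0)⁻¹` is the unique power series `p` with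
`p(0) = 1` satisfying `p(F(z,w))·F^{1,0}(z,w) = p(z)` and `p(F(z,w))·F^{0,1}(z,w) = p(w)`;
moreover `p_F(ι(z))·ι'(z) = -p_F(z)`. -/
theorem pF_characterization (R : Type*) [CommRing R] (𝓕 : FormalGroupLaw R) :
    ((∀ n : ℤ, n < 0 → 𝓕.pF n = 0) ∧
     mulS (fun i => 𝓕.F i 1) 𝓕.pF = oneS R ∧
     𝓕.pF 0 = 1 ∧
     mulS2 (comp2 𝓕.pF 𝓕.F) (d10 𝓕.F) = (fun a b => if b = 0 then 𝓕.pF a else 0) ∧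
     mulS2 (comp2 𝓕.pF 𝓕.F) (d01 𝓕.F) = (fun a b => if a = 0 then 𝓕.pF b else 0)) ∧
    (∀ q : ℤ → R, (∀ n : ℤ, n < 0 → q n = 0) → q 0 = 1 →
      mulS2 (comp2 q 𝓕.F) (d10 𝓕.F) = (fun a b => if b = 0 then q a else 0) →
      mulS2 (comp2 q 𝓕.F) (d01 𝓕.F) = (fun a b => if a = 0 then q b else 0) →
      q = 𝓕.pF) ∧
    mulS (comp1 𝓕.pF 𝓕.inv) (fderiv1 𝓕.inv) = (fun n => -𝓕.pF n) := by
  refine ⟨⟨𝓕.supp_pF, ?_, 𝓕.pF_zero, 𝓕.mulS2_comp2_pF_d10, 𝓕.mulS2_comp2_pF_d01⟩,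
    fun q hq h0 _ h => 𝓕.eq_pF_of_mulS2_comp2_d01 hq h0 h, 𝓕.mulS_comp1_pF_inv⟩
  refine FormalSeries.ser_injective (𝓕.supp_F_one.mulS 𝓕.supp_pF) FormalSeries.supp_oneS ?_
  rw [FormalSeries.ser_mulS 𝓕.supp_F_one 𝓕.supp_pF, 𝓕.ser_F_one_mul_ser_pF, FormalSeries.ser_oneS]
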